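/- Suppose the matrix Q = 2Q_ww + 2K_ywᵀ(I − K_yy)ᵀ P (I − K_yy) K_yw is positive definite, and define Φ(ψ_y) = min over ψ_w ∈ ℝ^{n_w} of G(ψ_y, ψ_w), F = Q^{−1} R with R = Q_wy + Q_ywᵀ + 2K_ywᵀ(I − K_yy)ᵀ P K_yy, and q = (Q_wu + Q_uwᵀ) ψ_u + c_w + K_ywᵀ(I − K_yy)ᵀ p + [2K_ywᵀ(I − K_yy)ᵀ P (I − K_yy) K_yx + Q_wx + Q_xwᵀ] ψ_x. Then for every ψ_y ∈ ℝ^{n_y}: (Φ(ψ_y) − Φ(−ψ_y))/2 = ℓᵀ ψ_y, where ℓ = K_yyᵀ p − Fᵀ q + (Q_yx + Q_xyᵀ + 2K_yyᵀ P (I − K_yy) K_yx) ψ_x + (Q_yu + Q_uyᵀ) ψ_u + c_y; that is, the linear part of the minimized Bellman right-hand side is the covector ℓ. -/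

import Mathlib

/-!
Expanding the next state puts the Bellman right-hand side in the form
`½ wᵀ Q w + wᵀ (q + R y) + yᵀ S y + ℓ₀ᵀ y + const`. With `Q` positive definite, completing the
square in `w` shows that minimizing over `w` contributes `-½ (q + R y)ᵀ Q⁻¹ (q + R y)`, whose part
odd in `y` is the cross term `-qᵀ Q⁻¹ R y = -(Fᵀ q)ᵀ y`.
-/

open Matrix Filter

noncomputable section

/-- The next-state map
`ψ_y⁺(ψ_y, ψ_w) = K_yy (ψ_y − K_yx ψ_x − K_yw ψ_w) + K_yx ψ_x + K_yw ψ_w`. -/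
def nextY {nx ny nw : ℕ}
    (Kyy : Matrix (Fin ny) (Fin ny) ℝ) (Kyx : Matrix (Fin ny) (Fin nx) ℝ)
    (Kyw : Matrix (Fin ny) (Fin nw) ℝ) (ψx : Fin nx → ℝ)
    (py : Fin ny → ℝ) (pw : Fin nw → ℝ) : Fin ny → ℝ :=
  Kyy.mulVec (py - Kyx.mulVec ψx - Kyw.mulVec pw) + Kyx.mulVec ψx + Kyw.mulVec pw

/-- The Bellman right-hand side
`G(ψ_y, ψ_w) = Σ_{i,j} ψ_iᵀ Q_{ij} ψ_j + Σ_i c_iᵀ ψ_i + c_0 + ψ_y⁺ᵀ P ψ_y⁺ + pᵀ ψ_y⁺`,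
where `ψ_y⁺ = ψ_y⁺(ψ_y, ψ_w)` and the variables `x`, `u` are held at `ψ_x`, `ψ_u`. -/
def bellmanG {nx ny nw nu : ℕ}
    (Kyy : Matrix (Fin ny) (Fin ny) ℝ) (Kyx : Matrix (Fin ny) (Fin nx) ℝ)
    (Kyw : Matrix (Fin ny) (Fin nw) ℝ)
    (Qxx : Matrix (Fin nx) (Fin nx) ℝ) (Qxy : Matrix (Fin nx) (Fin ny) ℝ)
    (Qxw : Matrix (Fin nx) (Fin nw) ℝ) (Qxu : Matrix (Fin nx) (Fin nu) ℝ)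
    (Qyx : Matrix (Fin ny) (Fin nx) ℝ) (Qyy : Matrix (Fin ny) (Fin ny) ℝ)
    (Qyw : Matrix (Fin ny) (Fin nw) ℝ) (Qyu : Matrix (Fin ny) (Fin nu) ℝ)
    (Qwx : Matrix (Fin nw) (Fin nx) ℝ) (Qwy : Matrix (Fin nw) (Fin ny) ℝ)
    (Qww : Matrix (Fin nw) (Fin nw) ℝ) (Qwu : Matrix (Fin nw) (Fin nu) ℝ)
    (Qux : Matrix (Fin nu) (Fin nx) ℝ) (Quy : Matrix (Fin nu) (Fin ny) ℝ)
    (Quw : Matrix (Fin nu) (Fin nw) ℝ) (Quu : Matrix (Fin nu) (Fin nu) ℝ)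
    (cx : Fin nx → ℝ) (cy : Fin ny → ℝ) (cw : Fin nw → ℝ) (cu : Fin nu → ℝ)
    (c0 : ℝ) (ψx : Fin nx → ℝ) (ψu : Fin nu → ℝ)
    (P : Matrix (Fin ny) (Fin ny) ℝ) (p : Fin ny → ℝ)
    (py : Fin ny → ℝ) (pw : Fin nw → ℝ) : ℝ :=
  ψx ⬝ᵥ Qxx.mulVec ψx + ψx ⬝ᵥ Qxy.mulVec py + ψx ⬝ᵥ Qxw.mulVec pw +
    ψx ⬝ᵥ Qxu.mulVec ψu +
  py ⬝ᵥ Qyx.mulVec ψx + py ⬝ᵥ Qyy.mulVec py + py ⬝ᵥ Qyw.mulVec pw +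
    py ⬝ᵥ Qyu.mulVec ψu +
  pw ⬝ᵥ Qwx.mulVec ψx + pw ⬝ᵥ Qwy.mulVec py + pw ⬝ᵥ Qww.mulVec pw +
    pw ⬝ᵥ Qwu.mulVec ψu +
  ψu ⬝ᵥ Qux.mulVec ψx + ψu ⬝ᵥ Quy.mulVec py + ψu ⬝ᵥ Quw.mulVec pw +
    ψu ⬝ᵥ Quu.mulVec ψu +
  cx ⬝ᵥ ψx + cy ⬝ᵥ py + cw ⬝ᵥ pw + cu ⬝ᵥ ψu + c0 +
  nextY Kyy Kyx Kyw ψx py pw ⬝ᵥ P.mulVec (nextY Kyy Kyx Kyw ψx py pw) +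
  p ⬝ᵥ nextY Kyy Kyx Kyw ψx py pw

section QuadraticForm

variable {α m n : Type*} [Fintype m] [Fintype n]

theorem dotProduct_mulVec_comm_of_isSymm [CommSemiring α] {M : Matrix n n α} (hM : M.IsSymm)
    (v w : n → α) : v ⬝ᵥ M *ᵥ w = w ⬝ᵥ M *ᵥ v := by
  simpa only [hM.eq] using dotProduct_transpose_mulVec M v w

theorem add_dotProduct_mulVec_add_of_isSymm [CommSemiring α] {M : Matrix n n α} (hM : M.IsSymm)
    (v w : n → α) :
    (v + w) ⬝ᵥ M *ᵥ (v + w) = v ⬝ᵥ M *ᵥ v + 2 * (w ⬝ᵥ M *ᵥ v) + w ⬝ᵥ M *ᵥ w := by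
  simp only [mulVec_add, add_dotProduct, dotProduct_add,
    dotProduct_mulVec_comm_of_isSymm hM v w]
  ring

variable [DecidableEq m]

theorem completing_square_dotProduct_mulVec [CommRing α] {Q : Matrix m m α} (hQ : Q.IsSymm)
    (hdet : IsUnit Q.det) (s w : m → α) :
    (w + Q⁻¹ *ᵥ s) ⬝ᵥ Q *ᵥ (w + Q⁻¹ *ᵥ s) =
      w ⬝ᵥ Q *ᵥ w + 2 * (w ⬝ᵥ s) + s ⬝ᵥ Q⁻¹ *ᵥ s := by
  have hs : Q *ᵥ Q⁻¹ *ᵥ s = s := by rw [mulVec_mulVec, mul_nonsing_inv _ hdet, one_mulVec]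
  rw [add_dotProduct_mulVec_add_of_isSymm hQ, dotProduct_mulVec_comm_of_isSymm hQ (Q⁻¹ *ᵥ s) w, hs,
    dotProduct_comm (Q⁻¹ *ᵥ s) s]

theorem isLeast_range_quadratic {Q : Matrix m m ℝ} (hQ : Q.PosDef) (s : m → ℝ) (a : ℝ) :
    IsLeast (Set.range fun w : m → ℝ => 1 / 2 * (w ⬝ᵥ Q *ᵥ w) + w ⬝ᵥ s + a)
      (a - 1 / 2 * (s ⬝ᵥ Q⁻¹ *ᵥ s)) := by
  have square := completing_square_dotProduct_mulVec (isHermitian_iff_isSymm.mp hQ.isHermitian)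
    hQ.det_pos.ne'.isUnit s
  refine ⟨⟨-(Q⁻¹ *ᵥ s), ?_⟩, ?_⟩
  · have at_minimizer := square (-(Q⁻¹ *ᵥ s))
    rw [neg_add_cancel, zero_dotProduct] at at_minimizer
    linarith
  · rintro _ ⟨w, rfl⟩
    have nonneg : 0 ≤ (w + Q⁻¹ *ᵥ s) ⬝ᵥ Q *ᵥ (w + Q⁻¹ *ᵥ s) := by
      simpa only [star_trivial] using hQ.posSemidef.dotProduct_mulVec_nonneg (w + Q⁻¹ *ᵥ s)
    rw [square] at nonneg
    linarith

theorem iInf_quadratic {Q : Matrix m m ℝ} (hQ : Q.PosDef) (s : m → ℝ) (a : ℝ) :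
    ⨅ w : m → ℝ, (1 / 2 * (w ⬝ᵥ Q *ᵥ w) + w ⬝ᵥ s + a) = a - 1 / 2 * (s ⬝ᵥ Q⁻¹ *ᵥ s) :=
  (isLeast_range_quadratic hQ s a).csInf_eq

theorem odd_part_iInf_quadratic {Q : Matrix m m ℝ} (hQ : Q.PosDef) (R : Matrix m n ℝ)
    (S : Matrix n n ℝ) (q : m → ℝ) (l : n → ℝ) (a : ℝ) {G : (n → ℝ) → (m → ℝ) → ℝ}
    (hG : ∀ y w, G y w =
      1 / 2 * (w ⬝ᵥ Q *ᵥ w) + w ⬝ᵥ (q + R *ᵥ y) + (y ⬝ᵥ S *ᵥ y + l ⬝ᵥ y + a)) (y : n → ℝ) :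
    ((⨅ w, G y w) - ⨅ w, G (-y) w) / 2 = (l - (Q⁻¹ * R)ᵀ *ᵥ q) ⬝ᵥ y := by
  have hQinv : Q⁻¹.IsSymm := (isHermitian_iff_isSymm.mp hQ.isHermitian).inv
  have cross : ((Q⁻¹ * R)ᵀ *ᵥ q) ⬝ᵥ y = (R *ᵥ y) ⬝ᵥ Q⁻¹ *ᵥ q := by
    rw [dotProduct_comm, dotProduct_transpose_mulVec, ← mulVec_mulVec,
      dotProduct_mulVec_comm_of_isSymm hQinv]
  simp only [hG, iInf_quadratic hQ, add_dotProduct_mulVec_add_of_isSymm hQinv, sub_dotProduct,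
    cross, mulVec_neg, neg_dotProduct, dotProduct_neg]
  ring

end QuadraticForm

section Bellman

variable {nx ny nw nu : ℕ}
  (Kyy : Matrix (Fin ny) (Fin ny) ℝ) (Kyx : Matrix (Fin ny) (Fin nx) ℝ)
  (Kyw : Matrix (Fin ny) (Fin nw) ℝ)
  (Qxx : Matrix (Fin nx) (Fin nx) ℝ) (Qxy : Matrix (Fin nx) (Fin ny) ℝ)
  (Qxw : Matrix (Fin nx) (Fin nw) ℝ) (Qxu : Matrix (Fin nx) (Fin nu) ℝ)
  (Qyx : Matrix (Fin ny) (Fin nx) ℝ) (Qyy : Matrix (Fin ny) (Fin ny) ℝ)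
  (Qyw : Matrix (Fin ny) (Fin nw) ℝ) (Qyu : Matrix (Fin ny) (Fin nu) ℝ)
  (Qwx : Matrix (Fin nw) (Fin nx) ℝ) (Qwy : Matrix (Fin nw) (Fin ny) ℝ)
  (Qww : Matrix (Fin nw) (Fin nw) ℝ) (Qwu : Matrix (Fin nw) (Fin nu) ℝ)
  (Qux : Matrix (Fin nu) (Fin nx) ℝ) (Quy : Matrix (Fin nu) (Fin ny) ℝ)
  (Quw : Matrix (Fin nu) (Fin nw) ℝ) (Quu : Matrix (Fin nu) (Fin nu) ℝ)
  (cx : Fin nx → ℝ) (cy : Fin ny → ℝ) (cw : Fin nw → ℝ) (cu : Fin nu → ℝ)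
  (c0 : ℝ) (ψx : Fin nx → ℝ) (ψu : Fin nu → ℝ)
  (P : Matrix (Fin ny) (Fin ny) ℝ) (p : Fin ny → ℝ)

/-- The matrix `Q` of the paper: the Hessian of `bellmanG` in `ψ_w` when `Q_ww` and `P` are
symmetric. -/
def bellmanHessian : Matrix (Fin nw) (Fin nw) ℝ :=
  (2 : ℝ) • Qww + (2 : ℝ) • (Kywᵀ * (1 - Kyy)ᵀ * P * (1 - Kyy) * Kyw)

/-- The matrix `R` of the paper: the coupling `ψ_wᵀ R ψ_y` in `bellmanG` when `P` is symmetric. -/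
def bellmanCoupling : Matrix (Fin nw) (Fin ny) ℝ :=
  Qwy + Qywᵀ + (2 : ℝ) • (Kywᵀ * (1 - Kyy)ᵀ * P * Kyy)

/-- The vector `q` of the paper: the gradient of `bellmanG` in `ψ_w` at `ψ_y = 0`, `ψ_w = 0` when
`P` is symmetric. -/
def bellmanGradW : Fin nw → ℝ :=
  (Qwu + Quwᵀ) *ᵥ ψu + cw + (Kywᵀ * (1 - Kyy)ᵀ) *ᵥ p +
    ((2 : ℝ) • (Kywᵀ * (1 - Kyy)ᵀ * P * (1 - Kyy) * Kyx) + Qwx + Qxwᵀ) *ᵥ ψx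

/-- The gradient of `bellmanG` in `ψ_y` at `ψ_y = 0`, `ψ_w = 0` when `P` is symmetric; it is the
covector `ℓ` of the paper without the correction `-Fᵀ q` that comes from minimizing over `ψ_w`. -/
def bellmanGradY : Fin ny → ℝ :=
  Kyyᵀ *ᵥ p + (Qyx + Qxyᵀ + (2 : ℝ) • (Kyyᵀ * P * (1 - Kyy) * Kyx)) *ᵥ ψx +
    (Qyu + Quyᵀ) *ᵥ ψu + cy

theorem nextY_eq_add (y : Fin ny → ℝ) (w : Fin nw → ℝ) :
    nextY Kyy Kyx Kyw ψx y w =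
      (1 - Kyy) *ᵥ Kyx *ᵥ ψx + Kyy *ᵥ y + (1 - Kyy) *ᵥ Kyw *ᵥ w := by
  simp only [nextY, sub_mulVec, one_mulVec, mulVec_sub]
  abel

theorem quadratic_nextY (hP : P.IsSymm) (y : Fin ny → ℝ) (w : Fin nw → ℝ) :
    nextY Kyy Kyx Kyw ψx y w ⬝ᵥ P *ᵥ nextY Kyy Kyx Kyw ψx y w + p ⬝ᵥ nextY Kyy Kyx Kyw ψx y w =
      w ⬝ᵥ (Kywᵀ * (1 - Kyy)ᵀ * P * (1 - Kyy) * Kyw) *ᵥ w +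
      w ⬝ᵥ ((Kywᵀ * (1 - Kyy)ᵀ) *ᵥ p +
        (2 : ℝ) • (Kywᵀ * (1 - Kyy)ᵀ * P * (1 - Kyy) * Kyx) *ᵥ ψx +
        (2 : ℝ) • (Kywᵀ * (1 - Kyy)ᵀ * P * Kyy) *ᵥ y) +
      y ⬝ᵥ (Kyyᵀ * P * Kyy) *ᵥ y +
      y ⬝ᵥ (Kyyᵀ *ᵥ p + (2 : ℝ) • (Kyyᵀ * P * (1 - Kyy) * Kyx) *ᵥ ψx) +
      (nextY Kyy Kyx Kyw ψx 0 0 ⬝ᵥ P *ᵥ nextY Kyy Kyx Kyw ψx 0 0 +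
        p ⬝ᵥ nextY Kyy Kyx Kyw ψx 0 0) := by
  simp only [nextY_eq_add, add_dotProduct_mulVec_add_of_isSymm hP]
  simp only [← mulVec_mulVec, dotProduct_mulVec _ _ᵀ, vecMul_transpose, mulVec_add, mulVec_zero,
    dotProduct_add, add_dotProduct, dotProduct_smul, dotProduct_zero, zero_dotProduct, smul_eq_mul,
    dotProduct_comm p]
  ring

theorem bellmanG_eq_quadratic (hP : P.IsSymm) (y : Fin ny → ℝ) (w : Fin nw → ℝ) :
    bellmanG Kyy Kyx Kyw Qxx Qxy Qxw Qxu Qyx Qyy Qyw Qyu Qwx Qwy Qww Qwu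
        Qux Quy Quw Quu cx cy cw cu c0 ψx ψu P p y w =
      1 / 2 * (w ⬝ᵥ bellmanHessian Kyy Kyw Qww P *ᵥ w) +
      w ⬝ᵥ (bellmanGradW Kyy Kyx Kyw Qxw Qwx Qwu Quw cw ψx ψu P p +
        bellmanCoupling Kyy Kyw Qyw Qwy P *ᵥ y) +
      (y ⬝ᵥ (Qyy + Kyyᵀ * P * Kyy) *ᵥ y +
        bellmanGradY Kyy Kyx Qxy Qyx Qyu Quy cy ψx ψu P p ⬝ᵥ y +
        bellmanG Kyy Kyx Kyw Qxx Qxy Qxw Qxu Qyx Qyy Qyw Qyu Qwx Qwy Qww Qwu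
          Qux Quy Quw Quu cx cy cw cu c0 ψx ψu P p 0 0) := by
  have hnext := quadratic_nextY Kyy Kyx Kyw ψx P p hP y w
  rw [dotProduct_comm (bellmanGradY _ _ _ _ _ _ _ _ _ _ _)]
  simp only [bellmanG, bellmanHessian, bellmanGradW, bellmanCoupling, bellmanGradY,
    ← dotProduct_transpose_mulVec Qxy, ← dotProduct_transpose_mulVec Qxw,
    ← dotProduct_transpose_mulVec Qyw, ← dotProduct_transpose_mulVec Quy,
    ← dotProduct_transpose_mulVec Quw, dotProduct_comm cw w, dotProduct_comm cy y, add_mulVec,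
    smul_mulVec, dotProduct_add, dotProduct_smul, mulVec_zero, dotProduct_zero, zero_dotProduct,
    smul_eq_mul] at hnext ⊢
  linear_combination hnext

theorem bellman_linear_part_general (hP : P.IsSymm) (hQ : (bellmanHessian Kyy Kyw Qww P).PosDef)
    (Φ : (Fin ny → ℝ) → ℝ)
    (hΦ : ∀ y, Φ y = ⨅ w, bellmanG Kyy Kyx Kyw Qxx Qxy Qxw Qxu Qyx Qyy Qyw Qyu Qwx Qwy Qww Qwu
      Qux Quy Quw Quu cx cy cw cu c0 ψx ψu P p y w)
    (y : Fin ny → ℝ) :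
    (Φ y - Φ (-y)) / 2 =
      (bellmanGradY Kyy Kyx Qxy Qyx Qyu Quy cy ψx ψu P p -
        ((bellmanHessian Kyy Kyw Qww P)⁻¹ * bellmanCoupling Kyy Kyw Qyw Qwy P)ᵀ *ᵥ
          bellmanGradW Kyy Kyx Kyw Qxw Qwx Qwu Quw cw ψx ψu P p) ⬝ᵥ y := by
  rw [hΦ, hΦ]
  exact odd_part_iInf_quadratic hQ _ _ _ _ _ (fun _ _ => bellmanG_eq_quadratic (hP := hP) ..) y

end Bellman

/-- If `Q = 2Q_ww + 2K_ywᵀ(I − K_yy)ᵀ P (I − K_yy) K_yw` is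
positive definite, `Φ(ψ_y) = min_{ψ_w} G(ψ_y, ψ_w)`, `F = Q⁻¹ R` with
`R = Q_wy + Q_ywᵀ + 2K_ywᵀ(I − K_yy)ᵀ P K_yy`, and
`q = (Q_wu + Q_uwᵀ) ψ_u + c_w + K_ywᵀ(I − K_yy)ᵀ p +
[2K_ywᵀ(I − K_yy)ᵀ P (I − K_yy) K_yx + Q_wx + Q_xwᵀ] ψ_x`, then for every `ψ_y`,
`(Φ(ψ_y) − Φ(−ψ_y))/2 = ℓᵀ ψ_y` with
`ℓ = K_yyᵀ p − Fᵀ q + (Q_yx + Q_xyᵀ + 2K_yyᵀ P (I − K_yy) K_yx) ψ_x +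
(Q_yu + Q_uyᵀ) ψ_u + c_y`: the linear part of the minimized Bellman right-hand
side is the covector `ℓ`. -/
theorem bellman_linear_part {nx ny nw nu : ℕ}
    (Kyy : Matrix (Fin ny) (Fin ny) ℝ) (Kyx : Matrix (Fin ny) (Fin nx) ℝ)
    (Kyw : Matrix (Fin ny) (Fin nw) ℝ)
    (Qxx : Matrix (Fin nx) (Fin nx) ℝ) (Qxy : Matrix (Fin nx) (Fin ny) ℝ)
    (Qxw : Matrix (Fin nx) (Fin nw) ℝ) (Qxu : Matrix (Fin nx) (Fin nu) ℝ)
    (Qyx : Matrix (Fin ny) (Fin nx) ℝ) (Qyy : Matrix (Fin ny) (Fin ny) ℝ)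
    (Qyw : Matrix (Fin ny) (Fin nw) ℝ) (Qyu : Matrix (Fin ny) (Fin nu) ℝ)
    (Qwx : Matrix (Fin nw) (Fin nx) ℝ) (Qwy : Matrix (Fin nw) (Fin ny) ℝ)
    (Qww : Matrix (Fin nw) (Fin nw) ℝ) (Qwu : Matrix (Fin nw) (Fin nu) ℝ)
    (Qux : Matrix (Fin nu) (Fin nx) ℝ) (Quy : Matrix (Fin nu) (Fin ny) ℝ)
    (Quw : Matrix (Fin nu) (Fin nw) ℝ) (Quu : Matrix (Fin nu) (Fin nu) ℝ)
    (cx : Fin nx → ℝ) (cy : Fin ny → ℝ) (cw : Fin nw → ℝ) (cu : Fin nu → ℝ)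
    (c0 : ℝ) (ψx : Fin nx → ℝ) (ψu : Fin nu → ℝ)
    (P : Matrix (Fin ny) (Fin ny) ℝ) (p : Fin ny → ℝ)
    (hQww : Qww.IsSymm) (hQyy : Qyy.IsSymm) (hP : P.IsSymm)
    (Q : Matrix (Fin nw) (Fin nw) ℝ)
    (hQ : Q = (2 : ℝ) • Qww +
      (2 : ℝ) • (Kywᵀ * (1 - Kyy)ᵀ * P * (1 - Kyy) * Kyw))
    (hQpos : Q.PosDef)
    (F : Matrix (Fin nw) (Fin ny) ℝ)
    (hF : F = Q⁻¹ * (Qwy + Qywᵀ + (2 : ℝ) • (Kywᵀ * (1 - Kyy)ᵀ * P * Kyy)))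
    (q : Fin nw → ℝ)
    (hq : q = (Qwu + Quwᵀ).mulVec ψu + cw + (Kywᵀ * (1 - Kyy)ᵀ).mulVec p +
      ((2 : ℝ) • (Kywᵀ * (1 - Kyy)ᵀ * P * (1 - Kyy) * Kyx) + Qwx + Qxwᵀ).mulVec ψx)
    (Φ : (Fin ny → ℝ) → ℝ)
    (hΦ : ∀ py : Fin ny → ℝ,
      Φ py = ⨅ pw : Fin nw → ℝ,
        bellmanG Kyy Kyx Kyw Qxx Qxy Qxw Qxu Qyx Qyy Qyw Qyu Qwx Qwy Qww Qwu
          Qux Quy Quw Quu cx cy cw cu c0 ψx ψu P p py pw) :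
    ∀ py : Fin ny → ℝ,
      (Φ py - Φ (-py)) / 2 =
        (Kyyᵀ.mulVec p - Fᵀ.mulVec q +
          (Qyx + Qxyᵀ + (2 : ℝ) • (Kyyᵀ * P * (1 - Kyy) * Kyx)).mulVec ψx +
          (Qyu + Quyᵀ).mulVec ψu + cy) ⬝ᵥ py := by
  subst hQ hF hq
  intro py
  simp only [sub_add_eq_add_sub]
  exact bellman_linear_part_general (hP := hP) (hQ := hQpos) (hΦ := hΦ) ..
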